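/- arXiv:2403.05293 — 2 statements merged into one kernel-verified Lean document; each statement's English description precedes it below -/
import Mathlib

section
/- Consider momentum gradient flow on the 2-layer diagonal linear network with parameter λ > 0, zero initial velocities u̇_0 = v̇_0 = 0, initial predictor θ₀ = u₀ ⊙ v₀ = 0 (so L(θ₀) = ‖y‖₂²/(2n)), and initial balancedness Δ₀ = |u₀² − v₀²| with strictly positive coordinates. If λ‖y‖₂² ≤ n · min_{1≤i≤d} Δ_{0,i}, then the balancedness never vanishes: Δ_{t,i} > 0 for every t ∈ [0, ∞) and every coordinate i; moreover, if (u_t, v_t) converges as t → ∞, then the limit balancedness also has strictly positive coordinates. -/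
open Real Filter

open scoped RealInnerProductSpace

/-!
Fix a coordinate, write `a`, `b` for the two weights and `P = a² - b²`, with `a₀² > b₀²` (otherwise
swap the roles). The coupling force cancels in `λP̈ + Ṗ = 2λ(ȧ² - ḃ²)`. The mechanical energy
`E = λ/2 (‖u̇‖² + ‖v̇‖²) + L(θ) - inf L` is dissipated at rate at least `ȧ² + ḃ²`, so
`G = λṖ + P - 2λE` satisfies `Ġ ≥ 4λȧ² ≥ 0`. The smallness assumption says `G(0) ≥ 0`, hence
`λṖ + P ≥ G ≥ 0`, and `P` relaxes towards a level that is at least `G`. If `G` is positive at some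
time, this bounds `P` away from zero. Otherwise `ȧ = 0` throughout, so the force vanishes wherever
`b ≠ 0`; as `b` starts at rest it never moves either, and `P` is constant.
-/

section Calculus

open Set

lemma monotoneOn_of_forall_hasDerivWithinAt_nonneg {f f' : ℝ → ℝ} {D : Set ℝ} (hD : Convex ℝ D)
    (hf : ∀ t ∈ D, HasDerivWithinAt f (f' t) D t) (hf' : ∀ t ∈ D, 0 ≤ f' t) : MonotoneOn f D :=
  monotoneOn_of_hasDerivWithinAt_nonneg hD (fun t ht => (hf t ht).continuousWithinAt)
    (fun t ht => (hf t (interior_subset ht)).mono interior_subset)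
    fun t ht => hf' t (interior_subset ht)

lemma hasDerivWithinAt_eq_zero_of_eqOn_const {𝕜 F : Type*} [NontriviallyNormedField 𝕜]
    [NormedAddCommGroup F] [NormedSpace 𝕜 F] {f : 𝕜 → F} {f' c : F} {t : 𝕜} {D : Set 𝕜}
    (hD : UniqueDiffOn 𝕜 D) (ht : t ∈ D) (hf : HasDerivWithinAt f f' D t)
    (hc : ∀ s ∈ D, f s = c) : f' = 0 :=
  (hD t ht).eq_deriv D hf ((hasDerivWithinAt_const t D c).congr hc (hc t ht))

lemma hasDerivWithinAt_euclidean {𝕜 ι : Type*} [RCLike 𝕜] [Fintype ι]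
    {f : 𝕜 → EuclideanSpace 𝕜 ι} {f' : EuclideanSpace 𝕜 ι} {D : Set 𝕜} {t : 𝕜} :
    HasDerivWithinAt f f' D t ↔ ∀ i, HasDerivWithinAt (fun s => f s i) (f' i) D t := by
  rw [hasDerivWithinAt_iff_hasFDerivWithinAt, hasFDerivWithinAt_euclidean]
  refine forall_congr' fun i => ?_
  rw [hasDerivWithinAt_iff_hasFDerivWithinAt]
  congr! 1

end Calculus

section Relaxation

open Set

variable {P P' : ℝ → ℝ} {lam s t c : ℝ}

lemma exp_mul_sub_le_sub_of_le_mul_deriv_add (hlam : 0 < lam)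
    (hP : ∀ r ∈ Ici s, HasDerivWithinAt P (P' r) (Ici s) r)
    (hc : ∀ r ∈ Ici s, c ≤ lam * P' r + P r) (hst : s ≤ t) :
    exp (-(t - s) / lam) * (P s - c) ≤ P t - c := by
  have hderiv : ∀ r ∈ Ici s, HasDerivWithinAt (fun r => exp ((r - t) / lam) * (P r - c))
      (exp ((r - t) / lam) / lam * (lam * P' r + P r - c)) (Ici s) r := fun r hr => by
    have hexp := (((hasDerivWithinAt_id r (Ici s)).sub_const t).div_const lam).exp
    refine (hexp.mul ((hP r hr).sub_const c)).congr_deriv ?_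
    simp only [id_eq]
    field_simp
    ring
  have hmono := monotoneOn_of_forall_hasDerivWithinAt_nonneg (convex_Ici s) hderiv fun r hr =>
    mul_nonneg (by positivity) (sub_nonneg.2 (hc r hr))
  simpa using hmono self_mem_Ici hst hst

lemma le_of_le_mul_deriv_add (hlam : 0 < lam)
    (hP : ∀ r ∈ Ici s, HasDerivWithinAt P (P' r) (Ici s) r)
    (hc : ∀ r ∈ Ici s, c ≤ lam * P' r + P r) (hs : c ≤ P s) (hst : s ≤ t) : c ≤ P t :=
  sub_nonneg.1 <| (mul_nonneg (exp_pos _).le (sub_nonneg.2 hs)).trans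
    (exp_mul_sub_le_sub_of_le_mul_deriv_add hlam hP hc hst)

lemma exists_pos_forall_le_of_monotoneOn_le_mul_deriv_add {G : ℝ → ℝ} (hlam : 0 < lam)
    (hP : ∀ r ∈ Ici s, HasDerivWithinAt P (P' r) (Ici s) r) (hPs : 0 < P s)
    (hG : MonotoneOn G (Ici s)) (hGs : 0 ≤ G s)
    (hGP : ∀ r ∈ Ici s, G r ≤ lam * P' r + P r) (hst : s ≤ t) (hGt : 0 < G t) :
    ∃ c, 0 < c ∧ ∀ r ∈ Ici s, c ≤ P r := by
  have hdecay : ∀ r ∈ Ici s, exp (-(r - s) / lam) * P s ≤ P r := fun r hr => by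
    simpa using exp_mul_sub_le_sub_of_le_mul_deriv_add (c := 0) hlam hP
      (fun q hq => (hGs.trans (hG self_mem_Ici hq hq)).trans (hGP q hq)) hr
  set c := min (exp (-(t - s) / lam) * P s) (G t)
  have hbefore : ∀ r ∈ Icc s t, c ≤ P r := fun r hr => calc
    c ≤ exp (-(t - s) / lam) * P s := min_le_left _ _
    _ ≤ exp (-(r - s) / lam) * P s := by gcongr; exact hr.2
    _ ≤ P r := hdecay r hr.1
  refine ⟨c, lt_min (by positivity) hGt, fun r hr => ?_⟩
  rcases le_total r t with hrt | htr
  · exact hbefore r ⟨hr, hrt⟩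
  · have hsub : Ici t ⊆ Ici s := Ici_subset_Ici.2 hst
    refine le_of_le_mul_deriv_add hlam (fun q hq => (hP q (hsub hq)).mono hsub) (fun q hq => ?_)
      (hbefore t ⟨hst, le_rfl⟩) htr
    exact (min_le_right _ _).trans ((hG hst (hsub hq) hq).trans (hGP q (hsub hq)))

lemma velocity_eq_zero_of_mul_eq_zero {b b' b'' : ℝ → ℝ} (hlam : 0 < lam)
    (hb : ∀ r ∈ Ici s, HasDerivWithinAt b (b' r) (Ici s) r)
    (hb' : ∀ r ∈ Ici s, HasDerivWithinAt b' (b'' r) (Ici s) r)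
    (hode : ∀ r ∈ Ici s, b r * (lam * b'' r + b' r) = 0) (hs : b' s = 0) :
    ∀ r ∈ Ici s, b' r = 0 := by
  -- As `λ(b * b')' + b * b' = λb'²`, the function `b²` increases, so wherever `b` vanishes it has
  -- vanished from the start and `b' = 0` too; elsewhere the motion is free. Hence `b'²` decreases.
  have hmul_nonneg : ∀ r ∈ Ici s, 0 ≤ b r * b' r := fun r hr =>
    le_of_le_mul_deriv_add (P := b * b') hlam (fun q hq => (hb q hq).mul (hb' q hq))
      (fun q hq => by
        have hrate : lam * (b' q * b' q + b q * b'' q) + (b * b') q = lam * b' q ^ 2 := by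
          simp only [Pi.mul_apply]
          linear_combination hode q hq
        rw [hrate]
        positivity)
      (by simp [hs]) hr
  have hsq_mono : MonotoneOn (fun r => b r ^ 2) (Ici s) :=
    monotoneOn_of_forall_hasDerivWithinAt_nonneg (convex_Ici s) (fun r hr => (hb r hr).pow 2)
      fun r hr => by simpa [mul_assoc] using hmul_nonneg r hr
  have hrest_of_zero : ∀ r ∈ Ici s, b r = 0 → b' r = 0 := fun r hr hbr => by
    rcases (mem_Ici.1 hr).eq_or_lt with rfl | hsr
    · exact hs
    refine hasDerivWithinAt_eq_zero_of_eqOn_const (uniqueDiffOn_Icc hsr) (right_mem_Icc.2 hr)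
      ((hb r hr).mono Icc_subset_Ici_self) (c := 0) fun q hq => ?_
    have hle : b q ^ 2 ≤ b r ^ 2 := hsq_mono hq.1 hr hq.2
    simpa [hbr, sq_nonpos_iff] using hle
  have hspeed : MonotoneOn (fun r => -b' r ^ 2) (Ici s) :=
    monotoneOn_of_forall_hasDerivWithinAt_nonneg (convex_Ici s)
      (fun r hr => ((hb' r hr).pow 2).neg) fun r hr => by
        rcases mul_eq_zero.1 (hode r hr) with hbr | hfree
        · simp [hrest_of_zero r hr hbr]
        · have hfriction : -(2 * b' r * b'' r) = 2 * b' r ^ 2 / lam := by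
            field_simp
            linear_combination -b' r * hfree
          simpa [hfriction] using by positivity
  intro r hr
  have hle : -b' s ^ 2 ≤ -b' r ^ 2 := hspeed self_mem_Ici hr hr
  simpa [hs, sq_nonpos_iff] using hle

end Relaxation

open Set in
/-- One coordinate of momentum gradient flow on the half line: two weights `a`, `b` with friction,
mass `lam` and a coupling force `g`. The velocities and accelerations are carried explicitly. -/
structure IsCoupledPair (lam : ℝ) (g a b a' b' a'' b'' : ℝ → ℝ) : Prop where
  hasDeriv_fst : ∀ t ∈ Ici 0, HasDerivWithinAt a (a' t) (Ici 0) t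
  hasDeriv_snd : ∀ t ∈ Ici 0, HasDerivWithinAt b (b' t) (Ici 0) t
  hasDeriv_fst' : ∀ t ∈ Ici 0, HasDerivWithinAt a' (a'' t) (Ici 0) t
  hasDeriv_snd' : ∀ t ∈ Ici 0, HasDerivWithinAt b' (b'' t) (Ici 0) t
  ode_fst : ∀ t ∈ Ici 0, lam * a'' t + a' t + g t * b t = 0
  ode_snd : ∀ t ∈ Ici 0, lam * b'' t + b' t + g t * a t = 0

namespace IsCoupledPair

open Set

variable {lam : ℝ} {g a b a' b' a'' b'' E E' : ℝ → ℝ}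

lemma swap (h : IsCoupledPair lam g a b a' b' a'' b'') :
    IsCoupledPair lam g b a b' a' b'' a'' :=
  ⟨h.hasDeriv_snd, h.hasDeriv_fst, h.hasDeriv_snd', h.hasDeriv_fst', h.ode_snd, h.ode_fst⟩

lemma hasDerivWithinAt_sq_sub_sq (h : IsCoupledPair lam g a b a' b' a'' b'') :
    ∀ t ∈ Ici 0, HasDerivWithinAt (fun t => a t ^ 2 - b t ^ 2)
      (2 * (a t * a' t - b t * b' t)) (Ici 0) t := fun t ht =>
  (((h.hasDeriv_fst t ht).pow 2).sub ((h.hasDeriv_snd t ht).pow 2)).congr_deriv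
    (by push_cast; ring)

/-- The Lyapunov function `λṖ + P - 2λE` of a coupled pair, where `P = a² - b²` and `E` is an
energy. -/
noncomputable def lyapunov (lam : ℝ) (a b a' b' E : ℝ → ℝ) (t : ℝ) : ℝ :=
  lam * (2 * (a t * a' t - b t * b' t)) + (a t ^ 2 - b t ^ 2) - 2 * lam * E t

lemma hasDerivWithinAt_lyapunov (h : IsCoupledPair lam g a b a' b' a'' b'')
    (hE : ∀ t ∈ Ici 0, HasDerivWithinAt E (E' t) (Ici 0) t) :
    ∀ t ∈ Ici 0, HasDerivWithinAt (lyapunov lam a b a' b' E)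
      (2 * lam * (a' t ^ 2 - b' t ^ 2 - E' t)) (Ici 0) t := fun t ht => by
  have hvel := (((h.hasDeriv_fst t ht).mul (h.hasDeriv_fst' t ht)).sub
    ((h.hasDeriv_snd t ht).mul (h.hasDeriv_snd' t ht))).const_mul 2
  refine (((hvel.const_mul lam).add (h.hasDerivWithinAt_sq_sub_sq t ht)).sub
    ((hE t ht).const_mul (2 * lam))).congr_deriv ?_
  linear_combination 2 * a t * h.ode_fst t ht - 2 * b t * h.ode_snd t ht

lemma four_mul_sq_le_deriv_lyapunov {t : ℝ} (hlam : 0 ≤ lam)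
    (hE' : E' t ≤ -(a' t ^ 2 + b' t ^ 2)) :
    4 * lam * a' t ^ 2 ≤ 2 * lam * (a' t ^ 2 - b' t ^ 2 - E' t) := by
  have hle : 2 * a' t ^ 2 ≤ a' t ^ 2 - b' t ^ 2 - E' t := by linarith
  linarith [mul_le_mul_of_nonneg_left hle hlam]

lemma monotoneOn_lyapunov (h : IsCoupledPair lam g a b a' b' a'' b'') (hlam : 0 ≤ lam)
    (hE : ∀ t ∈ Ici 0, HasDerivWithinAt E (E' t) (Ici 0) t)
    (hE' : ∀ t ∈ Ici 0, E' t ≤ -(a' t ^ 2 + b' t ^ 2)) :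
    MonotoneOn (lyapunov lam a b a' b' E) (Ici 0) :=
  monotoneOn_of_forall_hasDerivWithinAt_nonneg (convex_Ici 0) (h.hasDerivWithinAt_lyapunov hE)
    fun t ht => le_trans (by positivity) (four_mul_sq_le_deriv_lyapunov hlam (hE' t ht))

lemma sq_sub_sq_eq_of_fst_at_rest (h : IsCoupledPair lam g a b a' b' a'' b'') (hlam : 0 < lam)
    (ha' : ∀ t ∈ Ici 0, a' t = 0) (hb'0 : b' 0 = 0) :
    ∀ t ∈ Ici 0, a t ^ 2 - b t ^ 2 = a 0 ^ 2 - b 0 ^ 2 := by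
  have ha'' : ∀ t ∈ Ici 0, a'' t = 0 := fun t ht =>
    hasDerivWithinAt_eq_zero_of_eqOn_const (uniqueDiffOn_Ici 0) ht (h.hasDeriv_fst' t ht) ha'
  have hforce : ∀ t ∈ Ici 0, g t * b t = 0 := fun t ht => by
    simpa [ha' t ht, ha'' t ht] using h.ode_fst t ht
  have hb' : ∀ t ∈ Ici 0, b' t = 0 :=
    velocity_eq_zero_of_mul_eq_zero hlam h.hasDeriv_snd h.hasDeriv_snd'
      (fun t ht => by linear_combination b t * h.ode_snd t ht - a t * hforce t ht) hb'0
  intro t ht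
  have hbound := (convex_Ici (0 : ℝ)).norm_image_sub_le_of_norm_hasDerivWithin_le (C := 0)
    h.hasDerivWithinAt_sq_sub_sq (fun s hs => by simp [ha' s hs, hb' s hs]) self_mem_Ici ht
  rwa [zero_mul, norm_le_zero_iff, sub_eq_zero] at hbound

theorem exists_pos_forall_le_sq_sub_sq (h : IsCoupledPair lam g a b a' b' a'' b'')
    (hlam : 0 < lam) (hE : ∀ t ∈ Ici 0, HasDerivWithinAt E (E' t) (Ici 0) t)
    (hE' : ∀ t ∈ Ici 0, E' t ≤ -(a' t ^ 2 + b' t ^ 2)) (hE_nonneg : ∀ t ∈ Ici 0, 0 ≤ E t)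
    (ha'0 : a' 0 = 0) (hb'0 : b' 0 = 0) (hpos : 0 < a 0 ^ 2 - b 0 ^ 2)
    (hsmall : 2 * lam * E 0 ≤ a 0 ^ 2 - b 0 ^ 2) :
    ∃ c, 0 < c ∧ ∀ t ∈ Ici 0, c ≤ a t ^ 2 - b t ^ 2 := by
  set G := lyapunov lam a b a' b' E with hG
  have hG_mono : MonotoneOn G (Ici 0) := h.monotoneOn_lyapunov hlam.le hE hE'
  have hG_zero : 0 ≤ G 0 := by simpa [hG, lyapunov, ha'0, hb'0] using hsmall
  by_cases hG_pos : ∃ t ∈ Ici 0, 0 < G t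
  · obtain ⟨t, ht, hGt⟩ := hG_pos
    refine exists_pos_forall_le_of_monotoneOn_le_mul_deriv_add hlam h.hasDerivWithinAt_sq_sub_sq
      hpos hG_mono hG_zero (fun r hr => ?_) ht hGt
    have hEr : 0 ≤ E r := hE_nonneg r hr
    exact sub_le_self _ (by positivity)
  · push Not at hG_pos
    have hG_eq : ∀ t ∈ Ici 0, G t = 0 := fun t ht =>
      (hG_pos t ht).antisymm (hG_zero.trans (hG_mono self_mem_Ici ht ht))
    have ha' : ∀ t ∈ Ici 0, a' t = 0 := fun t ht => by
      have hle := four_mul_sq_le_deriv_lyapunov hlam.le (hE' t ht)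
      rw [hasDerivWithinAt_eq_zero_of_eqOn_const (uniqueDiffOn_Ici 0) ht
        (h.hasDerivWithinAt_lyapunov hE t ht) hG_eq] at hle
      exact sq_nonpos_iff _ |>.1 (nonpos_of_mul_nonpos_right hle (by positivity))
    exact ⟨_, hpos, fun t ht => (h.sq_sub_sq_eq_of_fst_at_rest hlam ha' hb'0 t ht).ge⟩

theorem exists_pos_forall_le_abs_sq_sub_sq (h : IsCoupledPair lam g a b a' b' a'' b'')
    (hlam : 0 < lam) (hE : ∀ t ∈ Ici 0, HasDerivWithinAt E (E' t) (Ici 0) t)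
    (hE' : ∀ t ∈ Ici 0, E' t ≤ -(a' t ^ 2 + b' t ^ 2)) (hE_nonneg : ∀ t ∈ Ici 0, 0 ≤ E t)
    (ha'0 : a' 0 = 0) (hb'0 : b' 0 = 0) (hpos : 0 < |a 0 ^ 2 - b 0 ^ 2|)
    (hsmall : 2 * lam * E 0 ≤ |a 0 ^ 2 - b 0 ^ 2|) :
    ∃ c, 0 < c ∧ ∀ t ∈ Ici 0, c ≤ |a t ^ 2 - b t ^ 2| := by
  wlog hab : 0 ≤ a 0 ^ 2 - b 0 ^ 2 generalizing a b a' b' a'' b''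
  · simp_rw [abs_sub_comm (a _ ^ 2)] at hpos hsmall ⊢
    exact this h.swap (fun t ht => (hE' t ht).trans_eq (by ring)) hb'0 ha'0 hpos hsmall
      (by linarith)
  rw [abs_of_nonneg hab] at hpos hsmall
  obtain ⟨c, hc, hle⟩ :=
    h.exists_pos_forall_le_sq_sub_sq hlam hE hE' hE_nonneg ha'0 hb'0 hpos hsmall
  exact ⟨c, hc, fun t ht => (hle t ht).trans (le_abs_self _)⟩

end IsCoupledPair

section Flow

open Set

variable {ι : Type*} [Fintype ι] {L : EuclideanSpace ℝ ι → ℝ} {lam : ℝ}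
  {θ u v u' v' u'' v'' : ℝ → EuclideanSpace ℝ ι}

/-- Momentum gradient flow on the half line for the 2-layer diagonal linear network with loss `L`,
momentum parameter `lam` and predictor `θ = u ⊙ v`. The velocities and accelerations are carried
explicitly. -/
structure IsMomentumGradientFlow (L : EuclideanSpace ℝ ι → ℝ) (lam : ℝ)
    (θ u v u' v' u'' v'' : ℝ → EuclideanSpace ℝ ι) : Prop where
  hasDeriv_u : ∀ t ∈ Ici 0, HasDerivWithinAt u (u' t) (Ici 0) t
  hasDeriv_v : ∀ t ∈ Ici 0, HasDerivWithinAt v (v' t) (Ici 0) t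
  hasDeriv_u' : ∀ t ∈ Ici 0, HasDerivWithinAt u' (u'' t) (Ici 0) t
  hasDeriv_v' : ∀ t ∈ Ici 0, HasDerivWithinAt v' (v'' t) (Ici 0) t
  predictor_apply : ∀ t ∈ Ici 0, ∀ i, θ t i = u t i * v t i
  ode_u : ∀ t ∈ Ici 0, ∀ i, lam * u'' t i + u' t i + gradient L (θ t) i * v t i = 0
  ode_v : ∀ t ∈ Ici 0, ∀ i, lam * v'' t i + v' t i + gradient L (θ t) i * u t i = 0

/-- Kinetic energy of both layers, with mass `lam`, plus the loss as potential energy. -/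
noncomputable def mechanicalEnergy (L : EuclideanSpace ℝ ι → ℝ) (lam : ℝ)
    (θ u' v' : ℝ → EuclideanSpace ℝ ι) (t : ℝ) : ℝ :=
  lam / 2 * (‖u' t‖ ^ 2 + ‖v' t‖ ^ 2) + L (θ t)

namespace IsMomentumGradientFlow

lemma isCoupledPair (h : IsMomentumGradientFlow L lam θ u v u' v' u'' v'') (i : ι) :
    IsCoupledPair lam (fun t => gradient L (θ t) i) (fun t => u t i) (fun t => v t i)
      (fun t => u' t i) (fun t => v' t i) (fun t => u'' t i) (fun t => v'' t i) where
  hasDeriv_fst t ht := hasDerivWithinAt_euclidean.1 (h.hasDeriv_u t ht) i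
  hasDeriv_snd t ht := hasDerivWithinAt_euclidean.1 (h.hasDeriv_v t ht) i
  hasDeriv_fst' t ht := hasDerivWithinAt_euclidean.1 (h.hasDeriv_u' t ht) i
  hasDeriv_snd' t ht := hasDerivWithinAt_euclidean.1 (h.hasDeriv_v' t ht) i
  ode_fst t ht := h.ode_u t ht i
  ode_snd t ht := h.ode_v t ht i

lemma hasDerivWithinAt_predictor (h : IsMomentumGradientFlow L lam θ u v u' v' u'' v'') :
    ∀ t ∈ Ici 0, HasDerivWithinAt θ
      (WithLp.toLp 2 fun i => u' t i * v t i + u t i * v' t i) (Ici 0) t := fun t ht =>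
  hasDerivWithinAt_euclidean.2 fun i =>
    (((h.isCoupledPair i).hasDeriv_fst t ht).mul ((h.isCoupledPair i).hasDeriv_snd t ht)).congr
      (fun s hs => h.predictor_apply s hs i) (h.predictor_apply t ht i)

lemma hasDerivWithinAt_mechanicalEnergy (h : IsMomentumGradientFlow L lam θ u v u' v' u'' v'')
    (hL : Differentiable ℝ L) :
    ∀ t ∈ Ici 0, HasDerivWithinAt (mechanicalEnergy L lam θ u' v')
      (-(‖u' t‖ ^ 2 + ‖v' t‖ ^ 2)) (Ici 0) t := fun t ht => by
  have hloss := (hL (θ t)).hasGradientAt.hasFDerivAt.comp_hasDerivWithinAt t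
    (h.hasDerivWithinAt_predictor t ht)
  refine ((((h.hasDeriv_u' t ht).norm_sq.add (h.hasDeriv_v' t ht).norm_sq).const_mul
    (lam / 2)).add hloss).congr_deriv ?_
  simp only [InnerProductSpace.toDual_apply_apply, PiLp.inner_apply, RCLike.inner_apply,
    conj_trivial, EuclideanSpace.real_norm_sq_eq, Finset.mul_sum, ← Finset.sum_add_distrib,
    ← Finset.sum_neg_distrib]
  refine Finset.sum_congr rfl fun i _ => ?_
  linear_combination u' t i * h.ode_u t ht i + v' t i * h.ode_v t ht i

theorem exists_pos_forall_le_balancedness (h : IsMomentumGradientFlow L lam θ u v u' v' u'' v'')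
    (hlam : 0 < lam) (hL : Differentiable ℝ L) {m : ℝ} (hm : ∀ z, m ≤ L z)
    (hu'0 : u' 0 = 0) (hv'0 : v' 0 = 0) {i : ι} (hpos : 0 < |u 0 i ^ 2 - v 0 i ^ 2|)
    (hsmall : 2 * lam * (L (θ 0) - m) ≤ |u 0 i ^ 2 - v 0 i ^ 2|) :
    ∃ c, 0 < c ∧ ∀ t ∈ Ici 0, c ≤ |u t i ^ 2 - v t i ^ 2| := by
  refine (h.isCoupledPair i).exists_pos_forall_le_abs_sq_sub_sq hlam
    (E := fun t => mechanicalEnergy L lam θ u' v' t - m)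
    (fun t ht => (h.hasDerivWithinAt_mechanicalEnergy hL t ht).sub_const m) (fun t _ => ?_)
    (fun t _ => ?_) (by simp [hu'0]) (by simp [hv'0]) hpos
    (by simpa [mechanicalEnergy, hu'0, hv'0] using hsmall)
  · have hcoord (w : EuclideanSpace ℝ ι) : w i ^ 2 ≤ ‖w‖ ^ 2 :=
      sq_le_sq.2 (by simpa using PiLp.norm_apply_le w i)
    linarith [hcoord (u' t), hcoord (v' t)]
  · have hkinetic : 0 ≤ lam / 2 * (‖u' t‖ ^ 2 + ‖v' t‖ ^ 2) := by positivity
    simp only [mechanicalEnergy]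
    linarith [hm (θ t)]

end IsMomentumGradientFlow

end Flow

section QuadraticLoss

variable {E : Type*} [NormedAddCommGroup E] [InnerProductSpace ℝ E] {n : ℕ}

/-- The loss `(1/2n) ∑ᵢ (yᵢ - ⟨xᵢ, θ⟩)²` of linear regression; it is `0` for `n = 0`. -/
noncomputable def quadraticLoss (x : Fin n → E) (y : EuclideanSpace ℝ (Fin n)) (θ : E) : ℝ :=
  (1 / (2 * (n : ℝ))) * ∑ i, (y i - ⟪x i, θ⟫) ^ 2

lemma quadraticLoss_nonneg (x : Fin n → E) (y : EuclideanSpace ℝ (Fin n)) (θ : E) :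
    0 ≤ quadraticLoss x y θ := by
  unfold quadraticLoss
  positivity

lemma differentiable_quadraticLoss (x : Fin n → E) (y : EuclideanSpace ℝ (Fin n)) :
    Differentiable ℝ (quadraticLoss x y) := by
  unfold quadraticLoss
  have hinner (i : Fin n) : Differentiable ℝ fun θ => ⟪x i, θ⟫ := (innerSL ℝ (x i)).differentiable
  fun_prop

lemma quadraticLoss_zero (x : Fin n → E) (y : EuclideanSpace ℝ (Fin n)) :
    quadraticLoss x y 0 = ‖y‖ ^ 2 / (2 * n) := by
  simp only [quadraticLoss, inner_zero_right, sub_zero, EuclideanSpace.real_norm_sq_eq]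
  ring

end QuadraticLoss

theorem stmt_6_general {ι : Type*} [Fintype ι] {L : EuclideanSpace ℝ ι → ℝ}
    (hL : Differentiable ℝ L) {m : ℝ} (hm : ∀ z, m ≤ L z) {lam : ℝ} (hlam : 0 < lam)
    {θ u v u' v' u'' v'' : ℝ → EuclideanSpace ℝ ι}
    (h : IsMomentumGradientFlow L lam θ u v u' v' u'' v'')
    (hu0 : u' 0 = 0) (hv0 : v' 0 = 0) (hΔ0 : ∀ i, 0 < |u 0 i ^ 2 - v 0 i ^ 2|)
    (hsmall : ∀ i, 2 * lam * (L (θ 0) - m) ≤ |u 0 i ^ 2 - v 0 i ^ 2|) :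
    (∀ t, 0 ≤ t → ∀ i, 0 < |u t i ^ 2 - v t i ^ 2|) ∧
      ∀ ulim vlim : EuclideanSpace ℝ ι,
        Tendsto u atTop (nhds ulim) → Tendsto v atTop (nhds vlim) →
          ∀ i, 0 < |ulim i ^ 2 - vlim i ^ 2| := by
  choose c hc hle using fun i =>
    h.exists_pos_forall_le_balancedness hlam hL hm hu0 hv0 (hΔ0 i) (hsmall i)
  refine ⟨fun t ht i => (hc i).trans_le (hle i t ht), fun ulim vlim hu hv i => ?_⟩
  have hcoord {w : ℝ → EuclideanSpace ℝ ι} {wlim : EuclideanSpace ℝ ι}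
      (hw : Tendsto w atTop (nhds wlim)) : Tendsto (fun t => w t i) atTop (nhds (wlim i)) :=
    (EuclideanSpace.proj (𝕜 := ℝ) i).continuous.continuousAt.tendsto.comp hw
  exact (hc i).trans_le <| ge_of_tendsto (((hcoord hu).pow 2).sub ((hcoord hv).pow 2)).abs <|
    (eventually_ge_atTop 0).mono (hle i)

/-- For MGF on the 2-layer diagonal linear network with `λ > 0`, zero initial
velocities, zero initial predictor `θ₀ = u₀ ⊙ v₀ = 0`, and strictly positive initial
balancedness `Δ₀`, if `λ‖y‖₂² ≤ n·min_i Δ_{0,i}` (i.e. `λ‖y‖₂² ≤ n·Δ_{0,i}` for every `i`),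
then the balancedness never vanishes: `Δ_{t,i} > 0` for all `t ≥ 0` and all `i`; moreover any
limit of `(u_t, v_t)` as `t → ∞` also has strictly positive balancedness. -/
theorem stmt_6 {n d : ℕ}
    (x : Fin n → EuclideanSpace ℝ (Fin d)) (y : EuclideanSpace ℝ (Fin n))
    (L : EuclideanSpace ℝ (Fin d) → ℝ)
    (hL : L = fun θ => (1 / (2 * (n : ℝ))) * ∑ i, (y i - ⟪x i, θ⟫) ^ 2)
    (lam : ℝ) (hlam : 0 < lam)
    (u v u' v' u'' v'' : ℝ → EuclideanSpace ℝ (Fin d))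
    (hu' : ∀ t, HasDerivAt u (u' t) t) (hv' : ∀ t, HasDerivAt v (v' t) t)
    (hu'' : ∀ t, HasDerivAt u' (u'' t) t) (hv'' : ∀ t, HasDerivAt v' (v'' t) t)
    (hcu : Continuous u'') (hcv : Continuous v'')
    (θ : ℝ → EuclideanSpace ℝ (Fin d)) (hθ : ∀ t i, θ t i = u t i * v t i)
    (hodeu : ∀ t, 0 ≤ t → ∀ i, lam * u'' t i + u' t i + gradient L (θ t) i * v t i = 0)
    (hodev : ∀ t, 0 ≤ t → ∀ i, lam * v'' t i + v' t i + gradient L (θ t) i * u t i = 0)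
    (hu0 : u' 0 = 0) (hv0 : v' 0 = 0)
    (hθ0 : θ 0 = 0)
    (hΔ0 : ∀ i, 0 < |u 0 i ^ 2 - v 0 i ^ 2|)
    (hsmall : ∀ i, lam * ‖y‖ ^ 2 ≤ (n : ℝ) * |u 0 i ^ 2 - v 0 i ^ 2|) :
    (∀ t, 0 ≤ t → ∀ i, 0 < |u t i ^ 2 - v t i ^ 2|) ∧
      ∀ ulim vlim : EuclideanSpace ℝ (Fin d),
        Tendsto u atTop (nhds ulim) → Tendsto v atTop (nhds vlim) →
          ∀ i, 0 < |ulim i ^ 2 - vlim i ^ 2| := by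
  obtain rfl : L = quadraticLoss x y := hL
  have hflow : IsMomentumGradientFlow (quadraticLoss x y) lam θ u v u' v' u'' v'' :=
    ⟨fun t _ => (hu' t).hasDerivWithinAt, fun t _ => (hv' t).hasDerivWithinAt,
      fun t _ => (hu'' t).hasDerivWithinAt, fun t _ => (hv'' t).hasDerivWithinAt,
      fun t _ => hθ t, hodeu, hodev⟩
  refine stmt_6_general (differentiable_quadraticLoss x y) (quadraticLoss_nonneg x y) hlam hflow
    hu0 hv0 hΔ0 fun i => ?_
  calc 2 * lam * (quadraticLoss x y (θ 0) - 0) = lam * ‖y‖ ^ 2 / n := by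
        rw [hθ0, quadraticLoss_zero]; ring
    _ ≤ |u 0 i ^ 2 - v 0 i ^ 2| :=
        div_le_of_le_mul₀ n.cast_nonneg (abs_nonneg _) ((hsmall i).trans_eq (mul_comm _ _))
end

section
/- Consider momentum gradient flow on the 2-layer diagonal linear network with parameter λ > 0 and zero initial velocities, where the trajectory (u_t, v_t) is bounded and converges to (u_∞, v_∞), ẇ_{±,t} → 0 as t → ∞, each coordinate of t ↦ ẇ_{±,t} is square-integrable on (0, ∞), and the balancedness Δ_t has strictly positive coordinates for every t ∈ [0, ∞) and in the limit. Assume additionally that for every coordinate i, neither t ↦ ẇ_{+,t,i} nor t ↦ ẇ_{−,t,i} is identically zero. Then, with α = max(‖u₀‖_∞, ‖v₀‖_∞): (i) the perturbed initialisation θ̃₀ = (1/4)(w_{+,0}² ⊙ exp(−2λ∫₀^∞(ẇ_{+,t}/w_{+,t})² dt) − w_{−,0}² ⊙ exp(−2λ∫₀^∞(ẇ_{−,t}/w_{−,t})² dt)) satisfies |θ̃₀,i| < α² for every coordinate i; and (ii) Δ_∞ = Δ₀ ⊙ exp(−λ∫₀^∞ [(ẇ_{+,t}/w_{+,t})² +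 (ẇ_{−,t}/w_{−,t})²] dt), so that in particular Δ_{∞,i} < Δ_{0,i} for every coordinate i. -/
open Real Filter MeasureTheory

open scoped RealInnerProductSpace

/-!
The functions `w_± = u ± v` solve `λẅ + ẇ + c w = 0` with opposite coefficients `c = ±∇L(θ)`.
Along one such solution, `log |w| + λ ẇ / w` has derivative `-c - λ (ẇ / w)²`, so in the sum over
both signs the gradient cancels and only the dissipation `-λ [(ẇ₊/w₊)² + (ẇ₋/w₋)²]` remains.
Integrating over `(0, ∞)` gives the formula for `Δ_∞`, as `Δ = |w₊ w₋|`. For the perturbed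
initialisation, each of the two terms lies between `0` and `(w_{±,0} / 2)² < α²`, where strictness
holds since `|u₀| ≠ |v₀|`.
-/

open Set

open scoped Topology

theorem hasDerivWithinAt_euclideanSpace_apply {ι : Type*} [Fintype ι]
    {f : ℝ → EuclideanSpace ℝ ι} {f' : EuclideanSpace ℝ ι} {s : Set ℝ} {t : ℝ}
    (h : HasDerivWithinAt f f' s t) (i : ι) : HasDerivWithinAt (fun τ => f τ i) (f' i) s t :=
  (PiLp.hasFDerivAt_apply 2 (f t) i).comp_hasDerivWithinAt t h

theorem tendsto_euclideanSpace_apply {β ι : Type*} {l : Filter β} {f : β → EuclideanSpace ℝ ι}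
    {z : EuclideanSpace ℝ ι} (h : Tendsto f l (𝓝 z)) (i : ι) :
    Tendsto (fun b => f b i) l (𝓝 (z i)) :=
  ((PiLp.continuous_apply 2 _ i).tendsto z).comp h

theorem setIntegral_pos_of_continuousAt {X : Type*} [TopologicalSpace X] [MeasurableSpace X]
    {μ : Measure X} [μ.IsOpenPosMeasure] {f : X → ℝ} {s : Set X} {x : X} (hs : s ∈ 𝓝 x)
    (hnonneg : 0 ≤ᵐ[μ.restrict s] f) (hint : IntegrableOn f s μ) (hcont : ContinuousAt f x)
    (hne : f x ≠ 0) : 0 < ∫ y in s, f y ∂μ := by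
  rw [setIntegral_pos_iff_support_of_nonneg_ae hnonneg hint]
  exact Measure.measure_pos_of_mem_nhds μ (inter_mem (hcont.eventually_ne hne) hs)

theorem add_sq_lt_four_mul_sq {a b α : ℝ} (ha : |a| ≤ α) (hb : |b| ≤ α) (hab : a ^ 2 ≠ b ^ 2) :
    (a + b) ^ 2 < 4 * α ^ 2 := by
  have ha' : a ^ 2 ≤ α ^ 2 := sq_le_sq.2 (ha.trans (le_abs_self α))
  have hb' : b ^ 2 ≤ α ^ 2 := sq_le_sq.2 (hb.trans (le_abs_self α))
  have hlt : a ^ 2 + b ^ 2 < 2 * α ^ 2 := by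
    rcases hab.lt_or_gt with h | h <;> linarith
  linarith [add_sq_le (a := a) (b := b)]

theorem abs_weighted_sq_add_sub_sq_sub_lt {a b α r s : ℝ} (ha : |a| ≤ α) (hb : |b| ≤ α)
    (hab : a ^ 2 ≠ b ^ 2) (hr₀ : 0 ≤ r) (hr₁ : r ≤ 1) (hs₀ : 0 ≤ s) (hs₁ : s ≤ 1) :
    |1 / 4 * ((a + b) ^ 2 * r - (a - b) ^ 2 * s)| < α ^ 2 := by
  have hadd : (a + b) ^ 2 * r < 4 * α ^ 2 :=
    (mul_le_of_le_one_right (sq_nonneg _) hr₁).trans_lt (add_sq_lt_four_mul_sq ha hb hab)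
  have hsub : (a - b) ^ 2 * s < 4 * α ^ 2 :=
    (mul_le_of_le_one_right (sq_nonneg _) hs₁).trans_lt <| by
      simpa only [sub_eq_add_neg] using
        add_sq_lt_four_mul_sq ha ((abs_neg b).trans_le hb) (by rwa [neg_sq])
  have habs : |(a + b) ^ 2 * r - (a - b) ^ 2 * s| < 4 * α ^ 2 :=
    abs_sub_lt_of_nonneg_of_lt (by positivity) hadd (by positivity) hsub
  rw [abs_mul, abs_of_pos (by norm_num : (0 : ℝ) < 1 / 4)]
  linarith

/-- A nowhere vanishing solution `w` on `[0, ∞)` of the scalar momentum equation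
`λẅ + ẇ + c w = 0` that starts at rest. The functions `w'` and `w''` are its velocity and
acceleration; derivatives at `0` are one-sided. -/
structure IsMomentumFlow (lam : ℝ) (c w w' w'' : ℝ → ℝ) : Prop where
  hasDerivWithinAt : ∀ t, 0 ≤ t → HasDerivWithinAt w (w' t) (Ici 0) t
  hasDerivWithinAt_velocity : ∀ t, 0 ≤ t → HasDerivWithinAt w' (w'' t) (Ici 0) t
  ode : ∀ t, 0 ≤ t → lam * w'' t + w' t + c t * w t = 0
  velocity_zero : w' 0 = 0
  ne_zero : ∀ t, 0 ≤ t → w t ≠ 0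

/-- The quantity `log |w| + λ ẇ / w`, which turns the scalar momentum equation into an explicit
integral identity. No absolute value is written because `Real.log x = log |x|`. -/
noncomputable def logMomentum (lam : ℝ) (w w' : ℝ → ℝ) (t : ℝ) : ℝ :=
  Real.log (w t) + lam * (w' t / w t)

theorem tendsto_logMomentum {lam W : ℝ} {w w' : ℝ → ℝ} (hw : Tendsto w atTop (𝓝 W))
    (hw' : Tendsto w' atTop (𝓝 0)) (hW : W ≠ 0) :
    Tendsto (logMomentum lam w w') atTop (𝓝 (Real.log W)) := by
  have hlim := (hw.log hW).add ((hw'.div hw hW).const_mul lam)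
  rwa [zero_div, mul_zero, add_zero] at hlim

namespace IsMomentumFlow

section Single

variable {lam : ℝ} {c w w' w'' : ℝ → ℝ}

theorem hasDerivWithinAt_logMomentum (h : IsMomentumFlow lam c w w' w'') {t : ℝ} (ht : 0 ≤ t) :
    HasDerivWithinAt (logMomentum lam w w') (-c t - lam * (w' t / w t) ^ 2) (Ici 0) t := by
  have hw := h.ne_zero t ht
  have hderiv := ((h.hasDerivWithinAt t ht).log hw).add
    (((h.hasDerivWithinAt_velocity t ht).div (h.hasDerivWithinAt t ht) hw).const_mul lam)
  refine hderiv.congr_deriv ?_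
  field_simp
  linear_combination w t * h.ode t ht

theorem logMomentum_zero (h : IsMomentumFlow lam c w w' w'') :
    logMomentum lam w w' 0 = Real.log (w 0) := by
  simp only [logMomentum, h.velocity_zero, zero_div, mul_zero, add_zero]

theorem continuousAt_velocity_div (h : IsMomentumFlow lam c w w' w'') {t : ℝ} (ht : 0 < t) :
    ContinuousAt (fun τ => w' τ / w τ) t :=
  have hnhds : Ici (0 : ℝ) ∈ 𝓝 t := Ici_mem_nhds ht
  ((h.hasDerivWithinAt_velocity t ht.le).continuousWithinAt.continuousAt hnhds).div
    ((h.hasDerivWithinAt t ht.le).continuousWithinAt.continuousAt hnhds) (h.ne_zero t ht.le)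

end Single

variable {lam : ℝ} {c p p' p'' q q' q'' : ℝ → ℝ}

theorem hasDerivWithinAt_logMomentum_add (hp : IsMomentumFlow lam c p p' p'')
    (hq : IsMomentumFlow lam (-c) q q' q'') {t : ℝ} (ht : 0 ≤ t) :
    HasDerivWithinAt (fun τ => logMomentum lam p p' τ + logMomentum lam q q' τ)
      (-lam * ((p' t / p t) ^ 2 + (q' t / q t) ^ 2)) (Ici 0) t := by
  refine ((hp.hasDerivWithinAt_logMomentum ht).add
    (hq.hasDerivWithinAt_logMomentum ht)).congr_deriv ?_
  rw [Pi.neg_apply]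
  ring

theorem hasDerivAt_logMomentum_add (hp : IsMomentumFlow lam c p p' p'')
    (hq : IsMomentumFlow lam (-c) q q' q'') {t : ℝ} (ht : 0 < t) :
    HasDerivAt (fun τ => logMomentum lam p p' τ + logMomentum lam q q' τ)
      (-lam * ((p' t / p t) ^ 2 + (q' t / q t) ^ 2)) t :=
  (hp.hasDerivWithinAt_logMomentum_add hq ht.le).hasDerivAt (Ici_mem_nhds ht)

theorem integrableOn_dissipation (hlam : 0 < lam) (hp : IsMomentumFlow lam c p p' p'')
    (hq : IsMomentumFlow lam (-c) q q' q'') {l : ℝ}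
    (hlim : Tendsto (fun τ => logMomentum lam p p' τ + logMomentum lam q q' τ) atTop (𝓝 l)) :
    IntegrableOn (fun t => (p' t / p t) ^ 2 + (q' t / q t) ^ 2) (Ioi 0) := by
  have hint : IntegrableOn (fun t => -lam * ((p' t / p t) ^ 2 + (q' t / q t) ^ 2)) (Ioi 0) :=
    integrableOn_Ioi_deriv_of_nonpos
      (hp.hasDerivWithinAt_logMomentum_add hq le_rfl).continuousWithinAt
      (fun t ht => hp.hasDerivAt_logMomentum_add hq ht)
      (fun t _ => mul_nonpos_of_nonpos_of_nonneg (neg_nonpos.2 hlam.le) (by positivity)) hlim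
  exact (integrable_const_mul_iff (neg_ne_zero.2 hlam.ne').isUnit _).1 hint

theorem mul_integral_dissipation (hlam : 0 ≤ lam) (hp : IsMomentumFlow lam c p p' p'')
    (hq : IsMomentumFlow lam (-c) q q' q'') {l : ℝ}
    (hlim : Tendsto (fun τ => logMomentum lam p p' τ + logMomentum lam q q' τ) atTop (𝓝 l)) :
    lam * ∫ t in Ioi 0, ((p' t / p t) ^ 2 + (q' t / q t) ^ 2) =
      Real.log (p 0) + Real.log (q 0) - l := by
  have hint : ∫ t in Ioi 0, -lam * ((p' t / p t) ^ 2 + (q' t / q t) ^ 2) =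
      l - (logMomentum lam p p' 0 + logMomentum lam q q' 0) :=
    integral_Ioi_of_hasDerivAt_of_nonpos
      (hp.hasDerivWithinAt_logMomentum_add hq le_rfl).continuousWithinAt
      (fun t ht => hp.hasDerivAt_logMomentum_add hq ht)
      (fun t _ => mul_nonpos_of_nonpos_of_nonneg (neg_nonpos.2 hlam) (by positivity)) hlim
  rw [integral_const_mul, hp.logMomentum_zero, hq.logMomentum_zero] at hint
  linarith

theorem integral_dissipation_pos (hp : IsMomentumFlow lam c p p' p'')
    (hq : IsMomentumFlow lam (-c) q q' q'')
    (hint : IntegrableOn (fun t => (p' t / p t) ^ 2 + (q' t / q t) ^ 2) (Ioi 0))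
    (hmove : ∃ t, 0 ≤ t ∧ (p' t ≠ 0 ∨ q' t ≠ 0)) :
    0 < ∫ t in Ioi 0, ((p' t / p t) ^ 2 + (q' t / q t) ^ 2) := by
  obtain ⟨t, ht₀, hne⟩ := hmove
  have ht : 0 < t := ht₀.lt_of_ne <| by
    rintro rfl
    exact hne.elim (absurd hp.velocity_zero) (absurd hq.velocity_zero)
  refine setIntegral_pos_of_continuousAt (Ioi_mem_nhds ht)
    (Eventually.of_forall fun τ => by positivity) hint
    (((hp.continuousAt_velocity_div ht).pow 2).add ((hq.continuousAt_velocity_div ht).pow 2)) ?_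
  have hpt := hp.ne_zero t ht₀
  have hqt := hq.ne_zero t ht₀
  rcases hne with hp' | hq' <;> positivity

theorem abs_mul_lim_eq (hlam : 0 ≤ lam) (hp : IsMomentumFlow lam c p p' p'')
    (hq : IsMomentumFlow lam (-c) q q' q'') {P Q : ℝ} (hP : P ≠ 0) (hQ : Q ≠ 0)
    (hlim : Tendsto (fun τ => logMomentum lam p p' τ + logMomentum lam q q' τ) atTop
      (𝓝 (Real.log P + Real.log Q))) :
    |P * Q| = |p 0 * q 0| *
      Real.exp (-(lam * ∫ t in Ioi 0, ((p' t / p t) ^ 2 + (q' t / q t) ^ 2))) := by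
  have hp₀ := hp.ne_zero 0 le_rfl
  have hq₀ := hq.ne_zero 0 le_rfl
  rw [hp.mul_integral_dissipation hlam hq hlim, ← Real.log_mul hp₀ hq₀, ← Real.log_mul hP hQ,
    neg_sub, Real.exp_sub, Real.exp_log_eq_abs (mul_ne_zero hP hQ),
    Real.exp_log_eq_abs (mul_ne_zero hp₀ hq₀),
    mul_div_cancel₀ _ (abs_ne_zero.2 (mul_ne_zero hp₀ hq₀))]

theorem abs_mul_lim_lt (hlam : 0 < lam) (hp : IsMomentumFlow lam c p p' p'')
    (hq : IsMomentumFlow lam (-c) q q' q'') {P Q : ℝ} (hP : P ≠ 0) (hQ : Q ≠ 0)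
    (hlim : Tendsto (fun τ => logMomentum lam p p' τ + logMomentum lam q q' τ) atTop
      (𝓝 (Real.log P + Real.log Q)))
    (hmove : ∃ t, 0 ≤ t ∧ (p' t ≠ 0 ∨ q' t ≠ 0)) : |P * Q| < |p 0 * q 0| := by
  have hpos := hp.integral_dissipation_pos hq (hp.integrableOn_dissipation hlam hq hlim) hmove
  rw [hp.abs_mul_lim_eq hlam.le hq hP hQ hlim]
  exact mul_lt_of_lt_one_right
    (abs_pos.2 (mul_ne_zero (hp.ne_zero 0 le_rfl) (hq.ne_zero 0 le_rfl)))
    (Real.exp_lt_one_iff.2 (neg_neg_of_pos (mul_pos hlam hpos)))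

end IsMomentumFlow

theorem add_ne_zero_and_sub_ne_zero_of_abs_sq_sub_sq_pos {a b : ℝ} (h : 0 < |a ^ 2 - b ^ 2|) :
    a + b ≠ 0 ∧ a - b ≠ 0 := by
  rwa [abs_pos, sq_sub_sq, mul_ne_zero_iff] at h

/-- Momentum gradient flow on the 2-layer diagonal linear network over `[0, ∞)` with zero initial
velocities. The function `g t` stands for the gradient `∇L(θ_t)` along the trajectory and may be
arbitrary; the primed functions are velocities and accelerations, one-sided at `0`. -/
structure IsMomentumGradientFlow_s12 {ι : Type*} [Fintype ι] (lam : ℝ)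
    (g u v u' v' u'' v'' : ℝ → EuclideanSpace ℝ ι) : Prop where
  hasDerivWithinAt_u : ∀ t, 0 ≤ t → HasDerivWithinAt u (u' t) (Ici 0) t
  hasDerivWithinAt_v : ∀ t, 0 ≤ t → HasDerivWithinAt v (v' t) (Ici 0) t
  hasDerivWithinAt_velocity_u : ∀ t, 0 ≤ t → HasDerivWithinAt u' (u'' t) (Ici 0) t
  hasDerivWithinAt_velocity_v : ∀ t, 0 ≤ t → HasDerivWithinAt v' (v'' t) (Ici 0) t
  ode_u : ∀ t, 0 ≤ t → ∀ i, lam * u'' t i + u' t i + g t i * v t i = 0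
  ode_v : ∀ t, 0 ≤ t → ∀ i, lam * v'' t i + v' t i + g t i * u t i = 0
  velocity_u_zero : u' 0 = 0
  velocity_v_zero : v' 0 = 0

namespace IsMomentumGradientFlow_s12

variable {ι : Type*} [Fintype ι] {lam : ℝ} {g u v u' v' u'' v'' : ℝ → EuclideanSpace ℝ ι} {i : ι}

theorem isMomentumFlow_add (h : IsMomentumGradientFlow_s12 lam g u v u' v' u'' v'')
    (hΔ : ∀ t, 0 ≤ t → 0 < |u t i ^ 2 - v t i ^ 2|) :
    IsMomentumFlow lam (fun t => g t i) (fun t => u t i + v t i) (fun t => u' t i + v' t i)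
      (fun t => u'' t i + v'' t i) where
  hasDerivWithinAt t ht := hasDerivWithinAt_euclideanSpace_apply
    ((h.hasDerivWithinAt_u t ht).add (h.hasDerivWithinAt_v t ht)) i
  hasDerivWithinAt_velocity t ht := hasDerivWithinAt_euclideanSpace_apply
    ((h.hasDerivWithinAt_velocity_u t ht).add (h.hasDerivWithinAt_velocity_v t ht)) i
  ode t ht := by linear_combination h.ode_u t ht i + h.ode_v t ht i
  velocity_zero := by
    simp only [h.velocity_u_zero, h.velocity_v_zero, PiLp.zero_apply, add_zero]
  ne_zero t ht := (add_ne_zero_and_sub_ne_zero_of_abs_sq_sub_sq_pos (hΔ t ht)).1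

theorem isMomentumFlow_sub (h : IsMomentumGradientFlow_s12 lam g u v u' v' u'' v'')
    (hΔ : ∀ t, 0 ≤ t → 0 < |u t i ^ 2 - v t i ^ 2|) :
    IsMomentumFlow lam (-fun t => g t i) (fun t => u t i - v t i) (fun t => u' t i - v' t i)
      (fun t => u'' t i - v'' t i) where
  hasDerivWithinAt t ht := hasDerivWithinAt_euclideanSpace_apply
    ((h.hasDerivWithinAt_u t ht).sub (h.hasDerivWithinAt_v t ht)) i
  hasDerivWithinAt_velocity t ht := hasDerivWithinAt_euclideanSpace_apply
    ((h.hasDerivWithinAt_velocity_u t ht).sub (h.hasDerivWithinAt_velocity_v t ht)) i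
  ode t ht := by
    rw [Pi.neg_apply]
    linear_combination h.ode_u t ht i - h.ode_v t ht i
  velocity_zero := by
    simp only [h.velocity_u_zero, h.velocity_v_zero, PiLp.zero_apply, sub_zero]
  ne_zero t ht := (add_ne_zero_and_sub_ne_zero_of_abs_sq_sub_sq_pos (hΔ t ht)).2

end IsMomentumGradientFlow_s12

theorem tendsto_logMomentum_add_sub {ι : Type*} {lam : ℝ}
    {u v u' v' : ℝ → EuclideanSpace ℝ ι} {ulim vlim : EuclideanSpace ℝ ι}
    (hu : Tendsto u atTop (𝓝 ulim)) (hv : Tendsto v atTop (𝓝 vlim))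
    (hwp0 : Tendsto (fun t => u' t + v' t) atTop (𝓝 0))
    (hwm0 : Tendsto (fun t => u' t - v' t) atTop (𝓝 0)) {i : ι}
    (hDinf : 0 < |ulim i ^ 2 - vlim i ^ 2|) :
    Tendsto (fun τ =>
        logMomentum lam (fun t => u t i + v t i) (fun t => u' t i + v' t i) τ +
          logMomentum lam (fun t => u t i - v t i) (fun t => u' t i - v' t i) τ) atTop
      (𝓝 (Real.log (ulim i + vlim i) + Real.log (ulim i - vlim i))) := by
  obtain ⟨hadd, hsub⟩ := add_ne_zero_and_sub_ne_zero_of_abs_sq_sub_sq_pos hDinf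
  have hui := tendsto_euclideanSpace_apply hu i
  have hvi := tendsto_euclideanSpace_apply hv i
  exact (tendsto_logMomentum (hui.add hvi) (tendsto_euclideanSpace_apply hwp0 i) hadd).add
    (tendsto_logMomentum (hui.sub hvi) (tendsto_euclideanSpace_apply hwm0 i) hsub)

theorem abs_perturbed_initialisation_lt {ι : Type*} [Finite ι] {lam : ℝ} (hlam : 0 ≤ lam)
    {a b : ι → ℝ} {i : ι} (hab : a i ^ 2 ≠ b i ^ 2) (f g : ℝ → ℝ) :
    |1 / 4 * ((a i + b i) ^ 2 * Real.exp (-(2 * lam * ∫ t in Ioi (0 : ℝ), f t ^ 2)) -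
        (a i - b i) ^ 2 * Real.exp (-(2 * lam * ∫ t in Ioi (0 : ℝ), g t ^ 2)))| <
      max (⨆ j, |a j|) (⨆ j, |b j|) ^ 2 := by
  have hexp (k : ℝ → ℝ) : Real.exp (-(2 * lam * ∫ t in Ioi (0 : ℝ), k t ^ 2)) ≤ 1 :=
    Real.exp_le_one_iff.2 <| neg_nonpos.2 <|
      mul_nonneg (by positivity) (integral_nonneg fun t => sq_nonneg (k t))
  have hle_iSup (c : ι → ℝ) : |c i| ≤ ⨆ j, |c j| :=
    le_ciSup (f := fun j => |c j|) (finite_range _).bddAbove i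
  exact abs_weighted_sq_add_sub_sq_sub_lt ((hle_iSup a).trans (le_max_left _ _))
    ((hle_iSup b).trans (le_max_right _ _)) hab
    (Real.exp_nonneg _) (hexp f) (Real.exp_nonneg _) (hexp g)

theorem stmt_12_general {ι : Type*} [Fintype ι] {lam : ℝ} (hlam : 0 < lam)
    {g u v u' v' u'' v'' : ℝ → EuclideanSpace ℝ ι}
    (h : IsMomentumGradientFlow_s12 lam g u v u' v' u'' v'') {ulim vlim : EuclideanSpace ℝ ι}
    (hu : Tendsto u atTop (𝓝 ulim)) (hv : Tendsto v atTop (𝓝 vlim))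
    (hwp0 : Tendsto (fun t => u' t + v' t) atTop (𝓝 0))
    (hwm0 : Tendsto (fun t => u' t - v' t) atTop (𝓝 0))
    (hΔt : ∀ t, 0 ≤ t → ∀ i, 0 < |u t i ^ 2 - v t i ^ 2|)
    (hDinf : ∀ i, 0 < |ulim i ^ 2 - vlim i ^ 2|)
    (hmove : ∀ i, ∃ t, 0 ≤ t ∧ (u' t i + v' t i ≠ 0 ∨ u' t i - v' t i ≠ 0)) :
    (∀ i, |1 / 4 *
      ((u 0 i + v 0 i) ^ 2 *
          Real.exp (-(2 * lam *
            ∫ t in Ioi (0 : ℝ), ((u' t i + v' t i) / (u t i + v t i)) ^ 2)) -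
        (u 0 i - v 0 i) ^ 2 *
          Real.exp (-(2 * lam *
            ∫ t in Ioi (0 : ℝ), ((u' t i - v' t i) / (u t i - v t i)) ^ 2)))| <
        max (⨆ i, |u 0 i|) (⨆ i, |v 0 i|) ^ 2) ∧
      (∀ i, |ulim i ^ 2 - vlim i ^ 2| =
          |u 0 i ^ 2 - v 0 i ^ 2| *
            Real.exp (-(lam *
              ∫ t in Ioi (0 : ℝ),
                (((u' t i + v' t i) / (u t i + v t i)) ^ 2 +
                  ((u' t i - v' t i) / (u t i - v t i)) ^ 2)))) ∧
      (∀ i, |ulim i ^ 2 - vlim i ^ 2| < |u 0 i ^ 2 - v 0 i ^ 2|) := by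
  have hplus (i : ι) := h.isMomentumFlow_add fun t ht => hΔt t ht i
  have hminus (i : ι) := h.isMomentumFlow_sub fun t ht => hΔt t ht i
  have hlim (i : ι) := tendsto_logMomentum_add_sub (lam := lam) hu hv hwp0 hwm0 (hDinf i)
  have hne (i : ι) := add_ne_zero_and_sub_ne_zero_of_abs_sq_sub_sq_pos (hDinf i)
  have hinit (i : ι) : u 0 i ^ 2 ≠ v 0 i ^ 2 := sub_ne_zero.1 (abs_pos.1 (hΔt 0 le_rfl i))
  refine ⟨fun i => abs_perturbed_initialisation_lt hlam.le (hinit i) _ _,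
    fun i => ?_, fun i => ?_⟩ <;> rw [sq_sub_sq (ulim i), sq_sub_sq (u 0 i)]
  · exact (hplus i).abs_mul_lim_eq hlam.le (hminus i) (hne i).1 (hne i).2 (hlim i)
  · exact (hplus i).abs_mul_lim_lt hlam (hminus i) (hne i).1 (hne i).2 (hlim i) (hmove i)

/-- For MGF on the 2-layer diagonal linear network with `λ > 0`, zero initial
velocities, bounded converging trajectory, `ẇ_± → 0`, square-integrable coordinates of `ẇ_±`,
balancedness strictly positive for all times and in the limit, and `ẇ_{±,·,i}` not identically
zero for any coordinate `i`: with `α = max(‖u₀‖_∞, ‖v₀‖_∞)`,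
(i) the perturbed initialisation satisfies `|θ̃₀,i| < α²` for every `i`, and
(ii) `Δ_∞ = Δ₀ ⊙ exp(−λ∫₀^∞[(ẇ₊/w₊)² + (ẇ₋/w₋)²]dt)`, so `Δ_{∞,i} < Δ_{0,i}` for every `i`. -/
theorem stmt_12 {n d : ℕ}
    (x : Fin n → EuclideanSpace ℝ (Fin d)) (y : Fin n → ℝ)
    (L : EuclideanSpace ℝ (Fin d) → ℝ)
    (hL : L = fun θ => (1 / (2 * (n : ℝ))) * ∑ i, (y i - ⟪x i, θ⟫) ^ 2)
    (lam : ℝ) (hlam : 0 < lam)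
    (u v u' v' u'' v'' : ℝ → EuclideanSpace ℝ (Fin d))
    (hu' : ∀ t, HasDerivAt u (u' t) t) (hv' : ∀ t, HasDerivAt v (v' t) t)
    (hu'' : ∀ t, HasDerivAt u' (u'' t) t) (hv'' : ∀ t, HasDerivAt v' (v'' t) t)
    (hcu : Continuous u'') (hcv : Continuous v'')
    (θ : ℝ → EuclideanSpace ℝ (Fin d)) (hθ : ∀ t i, θ t i = u t i * v t i)
    (hodeu : ∀ t, 0 ≤ t → ∀ i, lam * u'' t i + u' t i + gradient L (θ t) i * v t i = 0)
    (hodev : ∀ t, 0 ≤ t → ∀ i, lam * v'' t i + v' t i + gradient L (θ t) i * u t i = 0)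
    (hu0 : u' 0 = 0) (hv0 : v' 0 = 0)
    (hbdd : ∃ C : ℝ, ∀ t, 0 ≤ t → ‖u t‖ ≤ C ∧ ‖v t‖ ≤ C)
    (ulim vlim : EuclideanSpace ℝ (Fin d))
    (hu : Tendsto u atTop (nhds ulim)) (hv : Tendsto v atTop (nhds vlim))
    (hwp0 : Tendsto (fun t => u' t + v' t) atTop (nhds 0))
    (hwm0 : Tendsto (fun t => u' t - v' t) atTop (nhds 0))
    (hsqp : ∀ i, IntegrableOn (fun t => (u' t i + v' t i) ^ 2) (Set.Ioi (0 : ℝ)))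
    (hsqm : ∀ i, IntegrableOn (fun t => (u' t i - v' t i) ^ 2) (Set.Ioi (0 : ℝ)))
    (hΔt : ∀ t, 0 ≤ t → ∀ i, 0 < |u t i ^ 2 - v t i ^ 2|)
    (hDinf : ∀ i, 0 < |ulim i ^ 2 - vlim i ^ 2|)
    -- for every coordinate, neither ẇ₊ nor ẇ₋ is identically zero on [0, ∞)
    (hnz : ∀ i, (∃ t, 0 ≤ t ∧ u' t i + v' t i ≠ 0) ∧ (∃ t, 0 ≤ t ∧ u' t i - v' t i ≠ 0))
    -- the initialisation scale
    (α : ℝ) (hα : α = max (⨆ i, |u 0 i|) (⨆ i, |v 0 i|))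
    -- the perturbed initialisation
    (θtilde : EuclideanSpace ℝ (Fin d))
    (hθtilde : ∀ i, θtilde i = (1 / 4) *
      ((u 0 i + v 0 i) ^ 2 *
          Real.exp (-(2 * lam *
            ∫ t in Set.Ioi (0 : ℝ), ((u' t i + v' t i) / (u t i + v t i)) ^ 2)) -
        (u 0 i - v 0 i) ^ 2 *
          Real.exp (-(2 * lam *
            ∫ t in Set.Ioi (0 : ℝ), ((u' t i - v' t i) / (u t i - v t i)) ^ 2)))) :
    -- (i) the perturbed initialisation is smaller than α²
    (∀ i, |θtilde i| < α ^ 2) ∧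
      -- (ii) formula for the asymptotic balancedness, and Δ_∞ < Δ₀
      (∀ i, |ulim i ^ 2 - vlim i ^ 2| =
          |u 0 i ^ 2 - v 0 i ^ 2| *
            Real.exp (-(lam *
              ∫ t in Set.Ioi (0 : ℝ),
                (((u' t i + v' t i) / (u t i + v t i)) ^ 2 +
                  ((u' t i - v' t i) / (u t i - v t i)) ^ 2)))) ∧
      (∀ i, |ulim i ^ 2 - vlim i ^ 2| < |u 0 i ^ 2 - v 0 i ^ 2|) := by
  subst hα
  simp only [hθtilde]
  exact stmt_12_general hlam (g := fun t => gradient L (θ t))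
    ⟨fun t _ => (hu' t).hasDerivWithinAt, fun t _ => (hv' t).hasDerivWithinAt,
      fun t _ => (hu'' t).hasDerivWithinAt, fun t _ => (hv'' t).hasDerivWithinAt,
      hodeu, hodev, hu0, hv0⟩
    hu hv hwp0 hwm0 hΔt hDinf fun i => (hnz i).1.imp fun _ h => ⟨h.1, .inl h.2⟩
end
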